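/- arXiv:2212.00699 — 3 statements merged into one kernel-verified Lean document; each statement's English description precedes it below -/
import Mathlib

section
/- In the two-player game G constructed from an X3C instance, let 𝒱 be a payment promise with 𝒳⋆_{G[𝒱]} ⊆ O_1 × O_2 and cost(𝒱) = 0, and let C_j ∈ 𝒞 and a_i ∈ C_j be such that c_j^{a_i} is undominated for player 1 in G[𝒱]. Then there exists a set C_l ∈ 𝒞 with a_{i+1} ∈ C_l such that c_l^{a_{i+1}} is undominated for player 2 in G[𝒱] (index i+1 taken modulo 3n̂). -/
/-!
The element strategy `a_{i+1}` of player 2 is undesired, so together with the undominated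
strategy `c_j^{a_i}` of player 1 it cannot form an undominated profile: it is dominated.
Since the game is finite, it is dominated by some undominated strategy `z` of player 2
(`exists_undominated_dominates`), and `z` is desired, say `z = c_l^{a_k}`.
Against `c_j^{a_i}` the strategy `a_{i+1}` earns at least `1`, hence so does `z`; but the profile
`(c_j^{a_i}, z)` is undominated, so zero cost forces its payments to vanish
(`payment_eq_zero`). Thus `U_2(c_j^{a_i}, c_l^{a_k}) ≥ 1`, which means `k = i + 1`.
-/

/-- In a game with player set `ι` and strategy sets `S i`, strategy `x` of player `i`
(weakly) dominates strategy `y`: `x` is at least as good against every profile of the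
other players' strategies and strictly better against at least one. -/
def Dominates {ι : Type*} [DecidableEq ι] {S : ι → Type*}
    (U : ι → (∀ j, S j) → ℝ) (i : ι) (x y : S i) : Prop :=
  (∀ σ : ∀ j, S j, U i (Function.update σ i y) ≤ U i (Function.update σ i x)) ∧
  (∃ σ : ∀ j, S j, U i (Function.update σ i y) < U i (Function.update σ i x))

/-- A strategy of player `i` is undominated if no strategy of player `i` dominates it. -/
def Undominated {ι : Type*} [DecidableEq ι] {S : ι → Type*}
    (U : ι → (∀ j, S j) → ℝ) (i : ι) (x : S i) : Prop :=
  ¬ ∃ y : S i, Dominates U i y x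

/-- The set `𝒳⋆` of strategy profiles consisting entirely of undominated strategies. -/
def UndomProfiles {ι : Type*} [DecidableEq ι] {S : ι → Type*}
    (U : ι → (∀ j, S j) → ℝ) : Set (∀ j, S j) :=
  {σ | ∀ i, Undominated U i (σ i)}

/-- The cost of a payment promise `V` for the game with utilities `U`:
the maximum, over undominated profiles of the modified game `G[V]`,
of the total payment. -/
noncomputable def gameCost {ι : Type*} [DecidableEq ι] [Fintype ι] {S : ι → Type*}
    (U V : ι → (∀ j, S j) → ℝ) : ℝ :=
  sSup ((fun σ => ∑ i, V i σ) '' UndomProfiles (fun i σ => U i σ + V i σ))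

/-- The rectangular strategy-profile region `O_1 × ⋯ × O_n`. -/
def rectSet {ι : Type*} {S : ι → Type*} (O : ∀ i, Set (S i)) : Set (∀ j, S j) :=
  {σ | ∀ i, σ i ∈ O i}

/-- `S` is an exact cover of the X3C instance with `3 * nh` elements (indexed by
`ZMod m`, `m = 3 * nh`) and sets `C`: `|S| = nh` and every element is covered. -/
def IsExactCover (m nh : ℕ) (C : ZMod m → Finset (ZMod m)) (S : Set (ZMod m)) : Prop :=
  S.ncard = nh ∧ ∀ a : ZMod m, ∃ j ∈ S, a ∈ C j

/-- The common strategy set of the two players: an element strategy `a_i` (left) or a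
strategy `c_j^{a_i}` for a set `C_j` and an element `a_i ∈ C_j` (right). -/
def X3CStrat (m : ℕ) (C : ZMod m → Finset (ZMod m)) : Type :=
  ZMod m ⊕ {p : ZMod m × ZMod m // p.2 ∈ C p.1}

/-- Utility of player 1 (first argument is player 1's strategy):
`U_1(a_i, c_j^{a_i}) = 2` and `U_1(a_i, c_j^{a_m}) = 1` for `a_m ∈ C_j ∖ {a_i}`
(whenever `a_i ∈ C_j`), `U_1(c_j^{a_i}, c_j^{a_i}) = 2` and
`U_1(c_j^{a_i}, c_j^{a_m}) = 1` for `a_m ∈ C_j ∖ {a_i}`; all other values are 0. -/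
def xU1 (m : ℕ) (C : ZMod m → Finset (ZMod m)) :
    X3CStrat m C → X3CStrat m C → ℝ
  | Sum.inl a, Sum.inr p => if a ∈ C p.1.1 then (if p.1.2 = a then 2 else 1) else 0
  | Sum.inr q, Sum.inr p =>
      if p.1.1 = q.1.1 then (if p.1.2 = q.1.2 then 2 else 1) else 0
  | _, _ => 0

/-- Utility of player 2 (first argument is player 1's strategy):
`U_2(c_p^{a_{i-1}}, a_i) = 1` and `U_2(c_p^{a_{i-1}}, c_j^{a_i}) = 1`
(indices mod `3 nh`); all other values are 0. -/
def xU2 (m : ℕ) (C : ZMod m → Finset (ZMod m)) :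
    X3CStrat m C → X3CStrat m C → ℝ
  | Sum.inr q, Sum.inl a => if q.1.2 = a - 1 then 1 else 0
  | Sum.inr q, Sum.inr p => if q.1.2 = p.1.2 - 1 then 1 else 0
  | _, _ => 0

/-- The two-player game built from the X3C instance. -/
def xGame (m : ℕ) (C : ZMod m → Finset (ZMod m)) :
    Fin 2 → (Fin 2 → X3CStrat m C) → ℝ :=
  fun i σ => if i = 0 then xU1 m C (σ 0) (σ 1) else xU2 m C (σ 0) (σ 1)

/-- The desired strategy set `O_1 = O_2 = {c_j^{a_i} : C_j ∈ 𝒞, a_i ∈ C_j}`. -/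
def xDesired (m : ℕ) (C : ZMod m → Finset (ZMod m)) : Set (X3CStrat m C) :=
  Set.range Sum.inr

lemma Dominates.trans {ι : Type*} [DecidableEq ι] {S : ι → Type*}
    {U : ι → (∀ j, S j) → ℝ} {i : ι} {x y z : S i}
    (h₁ : Dominates U i x y) (h₂ : Dominates U i y z) : Dominates U i x z := by
  obtain ⟨σ, hσ⟩ := h₁.2
  exact ⟨fun τ => (h₂.1 τ).trans (h₁.1 τ), σ, (h₂.1 σ).trans_lt hσ⟩

/-- With finitely many strategies, every dominated strategy is dominated by an undominated one:
dominance is a strict order, so the strategies dominating `x` have a maximal element. -/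
lemma exists_undominated_dominates {ι : Type*} [DecidableEq ι] {S : ι → Type*}
    (U : ι → (∀ j, S j) → ℝ) (i : ι) [Finite (S i)] (x : S i) (hx : ¬ Undominated U i x) :
    ∃ z, Undominated U i z ∧ Dominates U i z x := by
  have : IsTrans (S i) (Dominates U i) := ⟨fun _ _ _ h₁ h₂ => h₁.trans h₂⟩
  have : Std.Irrefl (Dominates U i) := ⟨fun _ h => by
    obtain ⟨σ, hσ⟩ := h.2
    exact lt_irrefl _ hσ⟩
  have wf : WellFounded (Dominates U i) := Finite.wellFounded_of_trans_of_irrefl _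
  obtain ⟨z, hz, hmin⟩ := wf.has_min {z | Dominates U i z x} (not_not.mp hx)
  refine ⟨z, ?_, hz⟩
  rintro ⟨w, hw⟩
  exact hmin w (hw.trans hz) hw

/-- A payment promise of cost zero pays nothing on undominated profiles. Finiteness makes the
supremum in `gameCost` a genuine upper bound. -/
lemma payment_eq_zero {ι : Type*} [DecidableEq ι] [Fintype ι] {S : ι → Type*}
    [∀ i, Finite (S i)] (U V : ι → (∀ j, S j) → ℝ) (hV : ∀ i σ, 0 ≤ V i σ)
    (hcost : gameCost U V = 0) (σ : ∀ j, S j)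
    (hσ : σ ∈ UndomProfiles (fun i σ => U i σ + V i σ)) (i : ι) : V i σ = 0 := by
  have hle : ∑ k, V k σ ≤ gameCost U V :=
    le_csSup (Set.toFinite _).bddAbove ⟨σ, hσ, rfl⟩
  have hi : V i σ ≤ ∑ k, V k σ :=
    Finset.single_le_sum (f := fun k => V k σ) (fun k _ => hV k σ) (Finset.mem_univ i)
  exact le_antisymm (by linarith) (hV i σ)

instance X3CStrat.instFinite (m : ℕ) [NeZero m] (C : ZMod m → Finset (ZMod m)) :
    Finite (X3CStrat m C) :=
  inferInstanceAs (Finite (ZMod m ⊕ {p : ZMod m × ZMod m // p.2 ∈ C p.1}))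

/-- with a zero-cost implementation `𝒱` of `O_1 × O_2`, if `c_j^{a_i}` is
undominated for player 1 in `G[𝒱]`, then some strategy `c_l^{a_{i+1}}` with
`a_{i+1} ∈ C_l` is undominated for player 2 (index `i + 1` mod `3 nh`). -/
theorem x3c_claim2 (m nh : ℕ) [NeZero m] (hm : m = 3 * nh)
    (C : ZMod m → Finset (ZMod m))
    (hC : ∀ j : ZMod m, (C j).card = 3)
    (hocc : ∀ a : ZMod m, Set.ncard {j : ZMod m | a ∈ C j} = 3)
    (V : Fin 2 → (Fin 2 → X3CStrat m C) → ℝ)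
    (hV : ∀ i σ, 0 ≤ V i σ)
    (himpl : UndomProfiles (fun i σ => xGame m C i σ + V i σ) ⊆
      rectSet (fun _ : Fin 2 => xDesired m C))
    (hcost : gameCost (xGame m C) V = 0)
    (j a : ZMod m) (ha : a ∈ C j)
    (hund : Undominated (fun i σ => xGame m C i σ + V i σ) (0 : Fin 2)
      (Sum.inr ⟨(j, a), ha⟩)) :
    ∃ l : ZMod m, ∃ hl : a + 1 ∈ C l,
      Undominated (fun i σ => xGame m C i σ + V i σ) (1 : Fin 2)
        (Sum.inr ⟨(l, a + 1), hl⟩) := by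
  set G : Fin 2 → (Fin 2 → X3CStrat m C) → ℝ := fun i σ => xGame m C i σ + V i σ with hG
  set x : X3CStrat m C := Sum.inr ⟨(j, a), ha⟩ with hx
  have hprof : ∀ y : X3CStrat m C, Undominated G 1 y →
      (![x, y] : Fin 2 → X3CStrat m C) ∈ UndomProfiles G := by
    intro y hy i
    fin_cases i
    · exact hund
    · exact hy
  have hdom : ¬ Undominated G 1 (Sum.inl (a + 1) : X3CStrat m C) := by
    intro h
    obtain ⟨p, hp⟩ := himpl (hprof _ h) 1
    exact Sum.inr_ne_inl hp
  obtain ⟨z, hz, hzd⟩ :=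
    exists_undominated_dominates (S := fun _ : Fin 2 => X3CStrat m C) G 1 _ hdom
  have hpay : V 1 ![x, z] = 0 :=
    payment_eq_zero (S := fun _ : Fin 2 => X3CStrat m C) _ V hV hcost _ (hprof z hz) 1
  obtain ⟨⟨⟨l, k⟩, hp⟩, hpz⟩ := himpl (hprof z hz) 1
  change Sum.inr _ = z at hpz
  have hupd : ∀ y : X3CStrat m C, Function.update ![x, x] 1 y = ![x, y] := by
    intro y
    ext i
    fin_cases i <;> simp
  have hrow := hzd.1 ![x, x]
  have h1 : xU2 m C x (Sum.inl (a + 1)) + V 1 ![x, Sum.inl (a + 1)]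
      ≤ xU2 m C x z + V 1 ![x, z] := by
    rw [← hupd z, ← hupd (Sum.inl (a + 1))]
    exact hrow
  have hone : xU2 m C x (Sum.inl (a + 1)) = 1 := by simp [hx, xU2]
  have hnonneg := hV 1 ![x, Sum.inl (a + 1)]
  have hge : 1 ≤ xU2 m C x z := by linarith
  have hk : a + 1 = k := by
    by_contra hne
    have hzero : xU2 m C x z = 0 := by
      rw [← hpz]
      exact if_neg fun h : a = k - 1 => hne (by rw [h]; ring)
    linarith
  subst hk
  exact ⟨l, hp, by rw [hpz]; exact hz⟩
end

section
/- In the degree-three game G constructed from an X3C instance, let 0 ≤ δ < 1 and let 𝒱 be a payment promise with 𝒳⋆_{G[𝒱]} ⊆ ∏_{i∈N} O_i and cost(𝒱) ≤ δ. Then for every set player C_j ∈ 𝒞, the set of undominated strategies of C_j in G[𝒱] is either {T_{C_j}} or {F_{C_j}}, i.e., it is a singleton. -/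
/-- The utilities of the degree-three graphical game: players are elements (left) and
sets (right), every player plays a Boolean (`true` = the `T`-strategy). An element
player `a` receives 1 iff it plays its `F`-strategy and the number of sets containing
`a` that play their `T`-strategy is 0, 2 or 3; set players always receive 0. -/
def dGame (m : ℕ) [NeZero m] (C : ZMod m → Finset (ZMod m)) :
    (ZMod m ⊕ ZMod m) → ((ZMod m ⊕ ZMod m) → Bool) → ℝ :=
  fun p σ =>
    match p with
    | Sum.inl a =>
        if σ (Sum.inl a) = false ∧
            ((Finset.univ.filter fun j => a ∈ C j ∧ σ (Sum.inr j) = true).card = 0 ∨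
             (Finset.univ.filter fun j => a ∈ C j ∧ σ (Sum.inr j) = true).card = 2 ∨
             (Finset.univ.filter fun j => a ∈ C j ∧ σ (Sum.inr j) = true).card = 3)
        then 1 else 0
    | Sum.inr _ => 0

/-- The desired strategy sets: `O_{a_i} = {T_{a_i}}` for element players and
`O_{C_j} = {T_{C_j}, F_{C_j}}` for set players. -/
def dDesired (m : ℕ) : (ZMod m ⊕ ZMod m) → Set Bool :=
  fun p => match p with
  | Sum.inl _ => {true}
  | Sum.inr _ => Set.univ

/-- Dominance is asymmetric, so a player with two strategies has an undominated one. -/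
lemma exists_undominated_bool {ι : Type*} [DecidableEq ι]
    (U : ι → (ι → Bool) → ℝ) (i : ι) :
    ∃ b : Bool, Undominated (S := fun _ => Bool) U i b := by
  by_contra h
  have hdom : ∀ b : Bool, Dominates (S := fun _ => Bool) U i (!b) b := by
    intro b
    by_contra hb
    refine h ⟨b, ?_⟩
    rintro ⟨y, hy⟩
    by_cases hyb : y = b
    · subst hyb
      obtain ⟨σ, hσ⟩ := hy.2
      exact lt_irrefl _ hσ
    · have : y = !b := by revert hyb; cases y <;> cases b <;> simp
      exact hb (this ▸ hy)
  obtain ⟨σ, hσ⟩ := (hdom true).2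
  exact absurd ((hdom false).1 σ) (not_le.mpr hσ)

lemma update_mem_undomProfiles {ι : Type*} [DecidableEq ι]
    {U : ι → (ι → Bool) → ℝ} {σ : ι → Bool}
    (hσ : σ ∈ UndomProfiles (S := fun _ => Bool) U) {i : ι} {b : Bool}
    (hb : Undominated (S := fun _ => Bool) U i b) :
    Function.update σ i b ∈ UndomProfiles (S := fun _ => Bool) U := by
  intro k
  by_cases hk : k = i
  · subst hk
    simpa using hb
  · simpa [Function.update_of_ne hk] using hσ k

/-- Each single payment at an undominated profile is bounded by the cost. -/
lemma payment_le_gameCost {ι : Type*} [DecidableEq ι] [Fintype ι]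
    (U V : ι → (ι → Bool) → ℝ) (hV : ∀ p σ, 0 ≤ V p σ) {σ : ι → Bool}
    (hσ : σ ∈ UndomProfiles (S := fun _ => Bool) (fun i σ => U i σ + V i σ)) (p : ι) :
    V p σ ≤ gameCost (S := fun _ => Bool) U V := by
  have h1 : V p σ ≤ ∑ i, V i σ :=
    Finset.single_le_sum (f := fun i => V i σ) (fun i _ => hV i σ) (Finset.mem_univ p)
  refine h1.trans (le_csSup ?_ ⟨σ, hσ, rfl⟩)
  exact (Set.toFinite _).bddAbove

/-- If the desired region is implemented at a cost below `1`, then in every undominated profile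
each element lies in exactly one set playing its `T`-strategy. -/
lemma card_eq_one_of_undom (m : ℕ) [NeZero m]
    (C : ZMod m → Finset (ZMod m))
    (hocc : ∀ a : ZMod m, Set.ncard {j : ZMod m | a ∈ C j} = 3)
    (V : (ZMod m ⊕ ZMod m) → ((ZMod m ⊕ ZMod m) → Bool) → ℝ)
    (hV : ∀ p σ, 0 ≤ V p σ)
    (himpl : UndomProfiles (fun p σ => dGame m C p σ + V p σ) ⊆ rectSet (dDesired m))
    (hcost : gameCost (dGame m C) V < 1)
    {σ : (ZMod m ⊕ ZMod m) → Bool}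
    (hσ : σ ∈ UndomProfiles (fun p σ => dGame m C p σ + V p σ)) (a : ZMod m) :
    (Finset.univ.filter fun j => a ∈ C j ∧ σ (Sum.inr j) = true).card = 1 := by
  have hle : (Finset.univ.filter fun j => a ∈ C j ∧ σ (Sum.inr j) = true).card ≤ 3 := by
    rw [← hocc a, Set.ncard_eq_toFinset_card']
    apply Finset.card_le_card
    intro j hj
    simp at hj ⊢
    exact hj.1
  have hTa : σ (Sum.inl a) = true := himpl hσ (Sum.inl a)
  have hF : ¬ Undominated (S := fun _ => Bool)
      (fun p σ => dGame m C p σ + V p σ) (Sum.inl a) false := by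
    intro h
    have := himpl (update_mem_undomProfiles hσ h) (Sum.inl a)
    simp [dDesired] at this
  obtain ⟨y, hy⟩ := not_not.mp hF
  have hyT : y = true := by
    cases y
    · obtain ⟨τ, hτ⟩ := hy.2
      exact absurd hτ (lt_irrefl _)
    · rfl
  subst hyT
  have hpay := payment_le_gameCost (dGame m C) V hV hσ (Sum.inl a)
  have h1 := hy.1 σ
  rw [show Function.update σ (Sum.inl a) true = σ by rw [← hTa, Function.update_eq_self]] at h1
  have h0 : dGame m C (Sum.inl a) σ = 0 := by simp [dGame, hTa]
  by_contra hne
  have h2 : dGame m C (Sum.inl a) (Function.update σ (Sum.inl a) false) = 1 := by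
    simp only [dGame, Function.update_self, ne_eq, reduceCtorEq, not_false_eq_true,
      Function.update_of_ne, true_and]
    rw [if_pos]
    omega
  have h3 := hV (Sum.inl a) (Function.update σ (Sum.inl a) false)
  simp only [h0, h2] at h1
  linarith

/-- with `0 ≤ δ < 1` and a payment promise implementing the desired
region of the degree-three game with cost at most `δ`, every set player has exactly one
undominated strategy: either its `T`-strategy or its `F`-strategy. -/
theorem deg3_claim2 (m nh : ℕ) [NeZero m] (hm : m = 3 * nh)
    (C : ZMod m → Finset (ZMod m))
    (hC : ∀ j : ZMod m, (C j).card = 3)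
    (hocc : ∀ a : ZMod m, Set.ncard {j : ZMod m | a ∈ C j} = 3)
    (δ : ℝ) (hδ0 : 0 ≤ δ) (hδ1 : δ < 1)
    (V : (ZMod m ⊕ ZMod m) → ((ZMod m ⊕ ZMod m) → Bool) → ℝ)
    (hV : ∀ p σ, 0 ≤ V p σ)
    (himpl : UndomProfiles (fun p σ => dGame m C p σ + V p σ) ⊆ rectSet (dDesired m))
    (hcost : gameCost (dGame m C) V ≤ δ) :
    ∀ j : ZMod m,
      {b : Bool | Undominated (fun p σ => dGame m C p σ + V p σ) (Sum.inr j) b} =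
          {true} ∨
        {b : Bool | Undominated (fun p σ => dGame m C p σ + V p σ) (Sum.inr j) b} =
          {false} := by
  intro j
  set U' : (ZMod m ⊕ ZMod m) → ((ZMod m ⊕ ZMod m) → Bool) → ℝ :=
    fun p σ => dGame m C p σ + V p σ with hU'
  have hboth : ¬ (Undominated (S := fun _ => Bool) U' (Sum.inr j) true ∧
      Undominated (S := fun _ => Bool) U' (Sum.inr j) false) := by
    rintro ⟨hT, hF⟩
    choose σ hσ using fun p => exists_undominated_bool U' p
    have hσ' : σ ∈ UndomProfiles (S := fun _ => Bool) U' := hσ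
    obtain ⟨a, ha⟩ : (C j).Nonempty := by
      rw [← Finset.card_pos, hC j]
      norm_num
    have key := fun {τ} hτ => card_eq_one_of_undom m C hocc V hV himpl
      (lt_of_le_of_lt hcost hδ1) (σ := τ) hτ a
    have kT := key (update_mem_undomProfiles hσ' hT)
    have kF := key (update_mem_undomProfiles hσ' hF)
    have hins : (Finset.univ.filter fun k =>
          a ∈ C k ∧ Function.update σ (Sum.inr j) true (Sum.inr k) = true) =
        insert j (Finset.univ.filter fun k =>
          a ∈ C k ∧ Function.update σ (Sum.inr j) false (Sum.inr k) = true) := by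
      ext k
      by_cases hk : k = j
      · subst hk
        simp [ha]
      · simp [hk, Function.update_of_ne]
    rw [hins, Finset.card_insert_of_notMem (by simp), kF] at kT
    norm_num at kT
  obtain ⟨b, hb⟩ := exists_undominated_bool U' (Sum.inr j)
  cases b
  · right
    ext c
    cases c
    · simpa using hb
    · simpa using fun h => hboth ⟨h, hb⟩
  · left
    ext c
    cases c
    · simpa using fun h => hboth ⟨hb, h⟩
    · simpa using hb
end

section
/- Let G = (N, 𝒳, 𝒰) be a finite game and 𝒪 = O_1 × ⋯ × O_n rectangular with each O_i nonempty. If a payment promise 𝒱 implements 𝒪 (i.e., 𝒳⋆_{G[𝒱]} ⊆ 𝒪), then there exists a family F = (F_1,…,F_n) ∈ ℱ such that for every player i, every o = (o_i, o₋ᵢ) ∈ 𝒪 and every x_i ∈ F_i⁻¹(o_i), V_i(o_i, o₋ᵢ) ≥ U_i(x_i, o₋ᵢ) − U_i(o_i, o₋ᵢ); consequently max_{o∈𝒪} Σ_{i∈N} V_i(o) ≥ min_{F∈ℱ} κ(F). -/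
/-- `F = (F_1, …, F_n)` is a valid family for the rectangular region `O`:
each `F_i` maps every strategy outside `O_i` into `O_i`
(its values on `O_i` are irrelevant). -/
def ValidF {ι : Type*} {S : ι → Type*} (O : ∀ i, Set (S i))
    (F : ∀ i, S i → S i) : Prop :=
  ∀ i : ι, ∀ x : S i, x ∉ O i → F i x ∈ O i

/-- `max(0, max_{x_i ∈ F_i⁻¹(o_i), x_i ∉ O_i} (U_i(x_i, o₋ᵢ) − U_i(o_i, o₋ᵢ)))`,
with the inner maximum over the empty set taken to be 0. -/
noncomputable def innerPay {ι : Type*} [DecidableEq ι] {S : ι → Type*}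
    (U : ι → (∀ j, S j) → ℝ) (O : ∀ i, Set (S i)) (F : ∀ i, S i → S i)
    (i : ι) (o : ∀ j, S j) : ℝ :=
  sSup (insert (0 : ℝ)
    {r | ∃ x : S i, x ∉ O i ∧ F i x = o i ∧
      r = U i (Function.update o i x) - U i o})

/-- `κ(F) = max_{o ∈ 𝒪} Σ_{i ∈ N} innerPay i o`. -/
noncomputable def kappa {ι : Type*} [DecidableEq ι] [Fintype ι] {S : ι → Type*}
    (U : ι → (∀ j, S j) → ℝ) (O : ∀ i, Set (S i)) (F : ∀ i, S i → S i) : ℝ :=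
  sSup ((fun o => ∑ i, innerPay U O F i o) '' rectSet O)

/-- The worst-case payment over the region `O`: `max_{o ∈ 𝒪} Σ_i V_i(o)`. -/
noncomputable def maxPay {ι : Type*} [Fintype ι] {S : ι → Type*}
    (V : ι → (∀ j, S j) → ℝ) (O : ∀ i, Set (S i)) : ℝ :=
  sSup ((fun o => ∑ i, V i o) '' rectSet O)

/-- In a finite game every strategy is everywhere at most as good as some undominated one. -/
theorem exists_undominated_ge {ι : Type*} [DecidableEq ι] [Fintype ι]
    {S : ι → Type*} [∀ i, Fintype (S i)] [∀ i, Nonempty (S i)]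
    (W : ι → (∀ j, S j) → ℝ) (i : ι) (x : S i) :
    ∃ y : S i, Undominated W i y ∧
      ∀ σ : ∀ j, S j, W i (Function.update σ i x) ≤ W i (Function.update σ i y) := by
  let A : Set (S i) := {y | ∀ σ : ∀ j, S j,
    W i (Function.update σ i x) ≤ W i (Function.update σ i y)}
  obtain ⟨y, hyA, hy⟩ := Set.exists_max_image A
    (fun y => ∑ σ : ∀ j, S j, W i (Function.update σ i y)) (Set.toFinite A)
    ⟨x, fun _ => le_rfl⟩
  refine ⟨y, ?_, hyA⟩
  rintro ⟨z, hz, τ, hτ⟩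
  have hlt : ∑ σ : ∀ j, S j, W i (Function.update σ i y) <
      ∑ σ : ∀ j, S j, W i (Function.update σ i z) :=
    Finset.sum_lt_sum (fun σ _ => hz σ) ⟨τ, Finset.mem_univ _, hτ⟩
  exact absurd hlt (not_lt.mpr (hy z fun σ => (hyA σ).trans (hz σ)))

theorem innerPay_nonneg {ι : Type*} [DecidableEq ι] {S : ι → Type*}
    (U : ι → (∀ j, S j) → ℝ) (O : ∀ i, Set (S i)) (F : ∀ i, S i → S i)
    (i : ι) (o : ∀ j, S j) : 0 ≤ innerPay U O F i o :=
  Real.sSup_nonneg' ⟨0, Set.mem_insert _ _, le_rfl⟩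

theorem kappa_nonneg {ι : Type*} [DecidableEq ι] [Fintype ι] {S : ι → Type*}
    (U : ι → (∀ j, S j) → ℝ) (O : ∀ i, Set (S i)) (F : ∀ i, S i → S i) :
    0 ≤ kappa U O F := by
  apply Real.sSup_nonneg
  rintro _ ⟨o, -, rfl⟩
  exact Finset.sum_nonneg fun i _ => innerPay_nonneg U O F i o

/-- if `V` implements the rectangular region `O`, then there is a valid
family `F` such that for every player `i`, every `o ∈ 𝒪` and every `x_i ∈ F_i⁻¹(o_i)`,
`V_i(o) ≥ U_i(x_i, o₋ᵢ) − U_i(o_i, o₋ᵢ)`; consequently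
`max_{o ∈ 𝒪} Σ_i V_i(o) ≥ min_{F ∈ ℱ} κ(F)`. -/
theorem implementation_lower_bound {ι : Type*} [DecidableEq ι] [Fintype ι]
    {S : ι → Type*} [∀ i, Fintype (S i)] [∀ i, Nonempty (S i)]
    (U : ι → (∀ j, S j) → ℝ) (O : ∀ i, Set (S i)) (hO : ∀ i, (O i).Nonempty)
    (V : ι → (∀ j, S j) → ℝ) (hV : ∀ i σ, 0 ≤ V i σ)
    (himpl : UndomProfiles (fun i σ => U i σ + V i σ) ⊆ rectSet O) :
    (∃ F : ∀ i, S i → S i, ValidF O F ∧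
        ∀ i : ι, ∀ o ∈ rectSet O, ∀ x : S i, x ∉ O i → F i x = o i →
          U i (Function.update o i x) - U i o ≤ V i o) ∧
      sInf {k : ℝ | ∃ F : ∀ i, S i → S i, ValidF O F ∧ k = kappa U O F} ≤
        maxPay V O := by
  have hF : ∃ F : ∀ i, S i → S i, ValidF O F ∧
      ∀ i : ι, ∀ o ∈ rectSet O, ∀ x : S i, x ∉ O i → F i x = o i →
        U i (Function.update o i x) - U i o ≤ V i o := by
    choose F hund hge using exists_undominated_ge (fun i σ => U i σ + V i σ)
    refine ⟨F, fun i x _ => ?_, fun i o _ x _ hx => ?_⟩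
    · -- `F i x` is a component of a fully undominated profile: the other players
      -- play the undominated strategies assigned to arbitrary ones.
      have hprof := himpl (a := fun j => F j (Function.update
        (fun k => Classical.arbitrary (S k)) i x j)) (fun j => hund j _)
      simpa using hprof i
    · have h := hge i x o
      rw [hx, Function.update_eq_self] at h
      have h0 := hV i (Function.update o i x)
      linarith
  refine ⟨hF, ?_⟩
  obtain ⟨F, hvalid, hpay⟩ := hF
  refine le_trans (b := kappa U O F) (csInf_le ⟨0, ?_⟩ ⟨F, hvalid, rfl⟩) ?_
  · rintro _ ⟨F', -, rfl⟩
    exact kappa_nonneg U O F'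
  · refine csSup_le (Set.Nonempty.image _ ⟨fun i => (hO i).some, fun i => (hO i).some_mem⟩) ?_
    rintro _ ⟨o, ho, rfl⟩
    have hle : ∑ i, innerPay U O F i o ≤ ∑ i, V i o := by
      refine Finset.sum_le_sum fun i _ => csSup_le (Set.insert_nonempty _ _) ?_
      rintro r (rfl | ⟨x, hxO, hx, rfl⟩)
      · exact hV i o
      · exact hpay i o ho x hxO hx
    exact hle.trans (le_csSup (Set.toFinite _).bddAbove ⟨o, ho, rfl⟩)
end
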